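/- arXiv:1605.06384 — 2 statements merged into one kernel-verified Lean document; each statement's English description precedes it below -/
import Mathlib

section
/- Let B be a non-degenerate, idempotent algebra over the complex numbers and let ω be a faithful functional on B. Then ω admits a modular automorphism, i.e. there exists an algebra automorphism σ of B such that ω(ab) = ω(bσ(a)) for all a, b in B, if and only if B·ω = ω·B as subsets of the linear dual of B. -/
/-!
A functional `ω` defines the bilinear form `(a, b) ↦ ω (a * b)`, whose two partial maps
`b ↦ ω·b` and `a ↦ a·ω` into the dual are injective when `ω` is faithful. A modular automorphism
is a factorization of the first map through the second; since both are injective, a bijective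
linear one exists exactly when their ranges agree. It is then multiplicative for free, because
`ω (c * σ (a * b)) = ω (a * b * c) = ω (b * c * σ a) = ω (c * σ a * σ b)`.
-/

theorem exists_linearEquiv_comp_eq_iff_range_eq {R M N P : Type*} [Semiring R]
    [AddCommMonoid M] [AddCommMonoid N] [AddCommMonoid P] [Module R M] [Module R N] [Module R P]
    {f : M →ₗ[R] P} {g : N →ₗ[R] P} (hf : Function.Injective f) (hg : Function.Injective g) :
    (∃ σ : M ≃ₗ[R] N, g ∘ₗ σ = f) ↔ LinearMap.range g = LinearMap.range f := by
  constructor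
  · rintro ⟨σ, rfl⟩
    exact (σ.range_comp g).symm
  · intro hrange
    let σ : M ≃ₗ[R] N :=
      .ofInjective f hf ≪≫ₗ .ofEq _ _ hrange.symm ≪≫ₗ (LinearEquiv.ofInjective g hg).symm
    refine ⟨σ, LinearMap.ext fun x => ?_⟩
    exact congrArg Subtype.val ((LinearEquiv.ofInjective g hg).apply_symm_apply _)

section Semiring

variable {k B M : Type*} [CommSemiring k] [NonUnitalSemiring B] [Module k B]
  [SMulCommClass k B B] [IsScalarTower k B B] [AddCommMonoid M] [Module k M]

/-- The bilinear form `(a, b) ↦ ω (a * b)` of a functional `ω`. For the bimodule structure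
of the dual, `mulForm ω b` is `ω·b` and `(mulForm ω).flip a` is `a·ω`. -/
def mulForm (ω : B →ₗ[k] M) : B →ₗ[k] B →ₗ[k] M :=
  (LinearMap.mul k B).compr₂ ω

/-- The modularity condition `ω (a * b) = ω (b * σ a)` relating a functional `ω` and a self-map
`σ`; the map is not required to be an automorphism. -/
def IsModular (ω : B →ₗ[k] M) (σ : B → B) : Prop :=
  ∀ a b : B, ω (a * b) = ω (b * σ a)

variable {ω : B →ₗ[k] M}

@[simp]
theorem mulForm_apply (a b : B) : mulForm ω a b = ω (a * b) :=
  rfl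

theorem coe_range_mulForm :
    (LinearMap.range (mulForm ω) : Set (B →ₗ[k] M)) = {f | ∃ b, ∀ c, f c = ω (b * c)} := by
  ext f
  simp [LinearMap.ext_iff, eq_comm]

theorem coe_range_mulForm_flip :
    (LinearMap.range (mulForm ω).flip : Set (B →ₗ[k] M)) = {f | ∃ a, ∀ c, f c = ω (c * a)} := by
  ext f
  simp [LinearMap.ext_iff, eq_comm]

theorem mulForm_flip_comp_eq_iff_isModular (σ : B →ₗ[k] B) :
    (mulForm ω).flip ∘ₗ σ = mulForm ω ↔ IsModular ω σ := by
  simp [LinearMap.ext_iff, IsModular, eq_comm]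

theorem IsModular.map_mul {σ : B → B} (hσ : IsModular ω σ)
    (hω : Function.Injective (mulForm ω).flip) (a b : B) : σ (a * b) = σ a * σ b := by
  refine hω (LinearMap.ext fun c => ?_)
  calc ω (c * σ (a * b))
      = ω (a * b * c) := (hσ (a * b) c).symm
    _ = ω (a * (b * c)) := by rw [mul_assoc]
    _ = ω (b * c * σ a) := hσ a (b * c)
    _ = ω (b * (c * σ a)) := by rw [mul_assoc]
    _ = ω (c * σ a * σ b) := hσ b (c * σ a)
    _ = ω (c * (σ a * σ b)) := by rw [mul_assoc]

theorem exists_multiplicative_isModular_iff_range_eq (hl : Function.Injective (mulForm ω))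
    (hr : Function.Injective (mulForm ω).flip) :
    (∃ σ : B ≃ₗ[k] B, (∀ a b : B, σ (a * b) = σ a * σ b) ∧ IsModular ω σ) ↔
      LinearMap.range (mulForm ω).flip = LinearMap.range (mulForm ω) := by
  rw [← exists_linearEquiv_comp_eq_iff_range_eq hl hr]
  refine exists_congr fun σ => ?_
  rw [mulForm_flip_comp_eq_iff_isModular]
  exact and_iff_right_of_imp fun hσ => hσ.map_mul hr

end Semiring

section Ring

variable {k B M : Type*} [CommSemiring k] [NonUnitalRing B] [Module k B]
  [SMulCommClass k B B] [IsScalarTower k B B] [AddCommMonoid M] [Module k M] {ω : B →ₗ[k] M}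

theorem mulForm_injective_iff :
    Function.Injective (mulForm ω) ↔ ∀ d : B, d ≠ 0 → ∃ b : B, ω (d * b) ≠ 0 := by
  rw [injective_iff_map_eq_zero]
  refine forall_congr' fun d => ?_
  rw [← not_imp_not]
  simp [LinearMap.ext_iff]

theorem mulForm_flip_injective_iff :
    Function.Injective (mulForm ω).flip ↔ ∀ d : B, d ≠ 0 → ∃ b : B, ω (b * d) ≠ 0 := by
  rw [injective_iff_map_eq_zero]
  refine forall_congr' fun d => ?_
  rw [← not_imp_not]
  simp [LinearMap.ext_iff]

theorem statement1_general
    (h_faithful : ∀ d : B, d ≠ 0 →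
      (∃ b : B, ω (d * b) ≠ 0) ∧ (∃ b' : B, ω (b' * d) ≠ 0)) :
    (∃ σ : B ≃ₗ[k] B, (∀ a b : B, σ (a * b) = σ a * σ b) ∧
        (∀ a b : B, ω (a * b) = ω (b * σ a))) ↔
      {f : B →ₗ[k] M | ∃ a : B, ∀ c : B, f c = ω (c * a)} =
        {f : B →ₗ[k] M | ∃ b : B, ∀ c : B, f c = ω (b * c)} := by
  have hl : Function.Injective (mulForm ω) :=
    mulForm_injective_iff.2 fun d hd => (h_faithful d hd).1
  have hr : Function.Injective (mulForm ω).flip :=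
    mulForm_flip_injective_iff.2 fun d hd => (h_faithful d hd).2
  rw [← coe_range_mulForm, ← coe_range_mulForm_flip, SetLike.coe_set_eq]
  exact exists_multiplicative_isModular_iff_range_eq hl hr

end Ring

/-- Let `B` be a non-degenerate, idempotent (not necessarily unital) algebra over `ℂ` and
let `ω` be a faithful linear functional on `B`.  Then `ω` admits a modular automorphism,
i.e. there is an algebra automorphism `σ` of `B` with `ω (a*b) = ω (b * σ a)` for all
`a b`, if and only if `B·ω = ω·B` as subsets of the linear dual of `B`, where
`(a·ω) c = ω (c*a)` and `(ω·b) c = ω (b*c)`. -/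
theorem statement1
    (B : Type*) [NonUnitalRing B] [Module ℂ B]
    [SMulCommClass ℂ B B] [IsScalarTower ℂ B B]
    (h_nd : ∀ b : B, b ≠ 0 → (∃ a : B, a * b ≠ 0) ∧ (∃ a' : B, b * a' ≠ 0))
    (h_idem : Submodule.span ℂ {x : B | ∃ a b : B, a * b = x} = ⊤)
    (ω : B →ₗ[ℂ] ℂ)
    (h_faithful : ∀ d : B, d ≠ 0 →
      (∃ b : B, ω (d * b) ≠ 0) ∧ (∃ b' : B, ω (b' * d) ≠ 0)) :
    (∃ σ : B ≃ₗ[ℂ] B, (∀ a b : B, σ (a * b) = σ a * σ b) ∧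
        (∀ a b : B, ω (a * b) = ω (b * σ a))) ↔
      {f : B →ₗ[ℂ] ℂ | ∃ a : B, ∀ c : B, f c = ω (c * a)} =
        {f : B →ₗ[ℂ] ℂ | ∃ b : B, ∀ c : B, f c = ω (b * c)} :=
  statement1_general h_faithful
end

section
/- Let B and C be idempotent algebras over the complex numbers with faithful functionals μ_B and μ_C, and let M be an idempotent B-C-bimodule. A functional ω on M is factorizable with respect to μ_B and μ_C if and only if there exist linear maps f : M → B and g : M → C such that ω(xm) = μ_B(x f(m)) and ω(my) = μ_C(g(m) y) for all x in B, y in C and m in M; in that case f and g are automatically a left B-module map and a right C-module map with μ_B∘f = ω = μ_C∘g. -/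
/-!
Everything is a comparison of functionals. If `ω (x m) = μ (x f(m))` for all `x` and `m`, then
`μ (b f(x m)) = ω (b x m) = μ (b x f(m))` for every `b`, and faithfulness of `μ` forces
`f(x m) = x f(m)`. Hence `μ (f(x m)) = μ (x f(m)) = ω (x m)`, so `μ ∘ f` and `ω` agree on `B M = M`.
The right module is handled as a left module over the opposite algebra.
-/

section Factor

open MulOpposite

variable {R B M : Type*} [CommRing R] [NonUnitalRing B] [Module R B] [AddCommMonoid M] [Module R M]

/-- `f` is a left `B`-module map (for the action `l`) through which `ω` factors as `μ ∘ f`; this is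
the left factor `_Bω` of a factorizable functional `ω`. -/
structure IsLeftFactor (μ : B →ₗ[R] R) (l : B →ₗ[R] M →ₗ[R] M) (ω : M →ₗ[R] R)
    (f : M →ₗ[R] B) : Prop where
  map_act : ∀ x m, f (l x m) = x * f m
  apply_eq : ∀ m, μ (f m) = ω m

/-- `g` is a right `B`-module map (for the action `r`) through which `ω` factors as `μ ∘ g`; this is
the right factor `ω_C` of a factorizable functional `ω`, with `B` in the role of `C`. -/
structure IsRightFactor (μ : B →ₗ[R] R) (r : M →ₗ[R] B →ₗ[R] M) (ω : M →ₗ[R] R)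
    (g : M →ₗ[R] B) : Prop where
  map_act : ∀ m y, g (r m y) = g m * y
  apply_eq : ∀ m, μ (g m) = ω m

variable {μ : B →ₗ[R] R} {ω : M →ₗ[R] R}

theorem map_act_of_apply_act_eq {l : B →ₗ[R] M →ₗ[R] M} {f : M → B}
    (hμ : ∀ d : B, d ≠ 0 → ∃ b, μ (b * d) ≠ 0)
    (hl : ∀ a b m, l (a * b) m = l a (l b m))
    (hf : ∀ x m, ω (l x m) = μ (x * f m)) (x : B) (m : M) :
    f (l x m) = x * f m := by
  by_contra hne
  obtain ⟨b, hb⟩ := hμ _ (sub_ne_zero.mpr hne)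
  have h_eq : μ (b * f (l x m)) = μ (b * (x * f m)) := calc
    μ (b * f (l x m)) = ω (l (b * x) m) := by rw [hl, hf]
    _ = μ (b * (x * f m)) := by rw [hf, mul_assoc]
  exact hb (by rw [mul_sub, map_sub, h_eq, sub_self])

theorem isLeftFactor_iff {l : B →ₗ[R] M →ₗ[R] M} {f : M →ₗ[R] B}
    (hμ : ∀ d : B, d ≠ 0 → ∃ b, μ (b * d) ≠ 0)
    (hl : ∀ a b m, l (a * b) m = l a (l b m))
    (h_span : Submodule.span R {m | ∃ x m', l x m' = m} = ⊤) :
    IsLeftFactor μ l ω f ↔ ∀ x m, ω (l x m) = μ (x * f m) := by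
  refine ⟨fun h x m => by rw [← h.map_act, h.apply_eq], fun hf => ?_⟩
  have h_map := map_act_of_apply_act_eq hμ hl hf
  have h_comp : μ ∘ₗ f = ω := by
    refine LinearMap.ext_on h_span ?_
    rintro _ ⟨x, m, rfl⟩
    rw [LinearMap.comp_apply, h_map, hf]
  exact ⟨h_map, LinearMap.congr_fun h_comp⟩

theorem isLeftFactor_op_iff {r : M →ₗ[R] B →ₗ[R] M} {g : M →ₗ[R] B} :
    IsLeftFactor (μ ∘ₗ (opLinearEquiv R).symm.toLinearMap)
      (r.flip ∘ₗ (opLinearEquiv R).symm.toLinearMap) ω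
      ((opLinearEquiv R).toLinearMap ∘ₗ g) ↔ IsRightFactor μ r ω g :=
  ⟨fun h => ⟨fun m y => op_injective (h.map_act (op y) m), h.apply_eq⟩,
    fun h => ⟨fun y m => congrArg op (h.map_act m y.unop), h.apply_eq⟩⟩

theorem isRightFactor_iff {r : M →ₗ[R] B →ₗ[R] M} {g : M →ₗ[R] B}
    (hμ : ∀ d : B, d ≠ 0 → ∃ b, μ (d * b) ≠ 0)
    (hr : ∀ m a b, r (r m a) b = r m (a * b))
    (h_span : Submodule.span R {m | ∃ m' y, r m' y = m} = ⊤) :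
    IsRightFactor μ r ω g ↔ ∀ m y, ω (r m y) = μ (g m * y) := by
  have hμ_op (d : Bᵐᵒᵖ) (hd : d ≠ 0) : ∃ b : Bᵐᵒᵖ, μ (b * d).unop ≠ 0 :=
    op_surjective.exists.mpr (hμ d.unop ((unop_ne_zero_iff d).mpr hd))
  have h_span_op : Submodule.span R {m | ∃ (y : Bᵐᵒᵖ) (m' : M), r m' y.unop = m} = ⊤ := by
    rw [← h_span]
    congr 1 with m
    exact op_surjective.exists.trans exists_comm
  have h_left := isLeftFactor_iff (ω := ω) (μ := μ ∘ₗ (opLinearEquiv R).symm.toLinearMap)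
    (l := r.flip ∘ₗ (opLinearEquiv R).symm.toLinearMap) (f := (opLinearEquiv R).toLinearMap ∘ₗ g)
    hμ_op (fun a b m => (hr m b.unop a.unop).symm) h_span_op
  rw [← isLeftFactor_op_iff, h_left]
  exact ⟨fun h m y => h (op y) m, fun h y m => h m y.unop⟩

end Factor

theorem statement4_general {R B C M : Type*} [CommRing R] [NonUnitalRing B] [Module R B]
    [NonUnitalRing C] [Module R C] [AddCommMonoid M] [Module R M]
    {μB : B →ₗ[R] R} {μC : C →ₗ[R] R}
    (hμB : ∀ d : B, d ≠ 0 → ∃ b, μB (b * d) ≠ 0) (hμC : ∀ d : C, d ≠ 0 → ∃ c, μC (d * c) ≠ 0)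
    {l : B →ₗ[R] M →ₗ[R] M} {r : M →ₗ[R] C →ₗ[R] M}
    (h_l : ∀ a b m, l (a * b) m = l a (l b m)) (h_r : ∀ m y y', r (r m y) y' = r m (y * y'))
    (h_BM : Submodule.span R {m | ∃ x m', l x m' = m} = ⊤)
    (h_MC : Submodule.span R {m | ∃ m' y, r m' y = m} = ⊤)
    (ω : M →ₗ[R] R) (f : M →ₗ[R] B) (g : M →ₗ[R] C) :
    ((∀ x m, f (l x m) = x * f m) ∧ (∀ m y, g (r m y) = g m * y) ∧
        (∀ m, μB (f m) = ω m) ∧ (∀ m, μC (g m) = ω m)) ↔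
      (∀ x m, ω (l x m) = μB (x * f m)) ∧ (∀ m y, ω (r m y) = μC (g m * y)) := by
  rw [← isLeftFactor_iff hμB h_l h_BM, ← isRightFactor_iff hμC h_r h_MC]
  exact ⟨fun ⟨hf, hg, hμf, hμg⟩ => ⟨⟨hf, hμf⟩, ⟨hg, hμg⟩⟩,
    fun ⟨hf, hg⟩ => ⟨hf.map_act, hg.map_act, hf.apply_eq, hg.apply_eq⟩⟩

/-- Let `B`, `C` be idempotent algebras over `ℂ` with faithful functionals `μB`, `μC`, and
let `M` be an idempotent `B`-`C`-bimodule (with `ℂ`-bilinear commuting actions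
`l : B → M → M` and `r : M → C → M`).  A functional `ω` on `M` is factorizable with
respect to `μB` and `μC` — i.e. there exist a left `B`-module map `f : M → B` and a
right `C`-module map `g : M → C` with `μB ∘ f = ω = μC ∘ g` — if and only if there
exist linear maps `f : M → B`, `g : M → C` such that `ω (x·m) = μB (x * f m)` and
`ω (m·y) = μC (g m * y)` for all `x, y, m`; and in that case any such `f`, `g` are
automatically a left `B`-module map and a right `C`-module map with
`μB ∘ f = ω = μC ∘ g`. -/
theorem statement4
    (B : Type*) [NonUnitalRing B] [Module ℂ B]
    [SMulCommClass ℂ B B] [IsScalarTower ℂ B B]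
    (C : Type*) [NonUnitalRing C] [Module ℂ C]
    [SMulCommClass ℂ C C] [IsScalarTower ℂ C C]
    (h_idem_B : Submodule.span ℂ {x : B | ∃ a b : B, a * b = x} = ⊤)
    (h_idem_C : Submodule.span ℂ {x : C | ∃ a b : C, a * b = x} = ⊤)
    (μB : B →ₗ[ℂ] ℂ) (μC : C →ₗ[ℂ] ℂ)
    (hμB : ∀ d : B, d ≠ 0 → (∃ b : B, μB (d * b) ≠ 0) ∧ (∃ b' : B, μB (b' * d) ≠ 0))
    (hμC : ∀ d : C, d ≠ 0 → (∃ b : C, μC (d * b) ≠ 0) ∧ (∃ b' : C, μC (b' * d) ≠ 0))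
    (M : Type*) [AddCommGroup M] [Module ℂ M]
    (l : B →ₗ[ℂ] M →ₗ[ℂ] M) (r : M →ₗ[ℂ] C →ₗ[ℂ] M)
    (h_l : ∀ (a b : B) (m : M), l (a * b) m = l a (l b m))
    (h_r : ∀ (m : M) (y y' : C), r (r m y) y' = r m (y * y'))
    (h_lr : ∀ (a : B) (m : M) (y : C), r (l a m) y = l a (r m y))
    (h_BM : Submodule.span ℂ {m : M | ∃ (x : B) (m' : M), l x m' = m} = ⊤)
    (h_MC : Submodule.span ℂ {m : M | ∃ (m' : M) (y : C), r m' y = m} = ⊤)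
    (ω : M →ₗ[ℂ] ℂ) :
    ((∃ (f : M →ₗ[ℂ] B) (g : M →ₗ[ℂ] C),
        (∀ (x : B) (m : M), f (l x m) = x * f m) ∧
        (∀ (m : M) (y : C), g (r m y) = g m * y) ∧
        (∀ m : M, μB (f m) = ω m) ∧ (∀ m : M, μC (g m) = ω m)) ↔
      (∃ (f : M →ₗ[ℂ] B) (g : M →ₗ[ℂ] C),
        (∀ (x : B) (m : M), ω (l x m) = μB (x * f m)) ∧
        (∀ (m : M) (y : C), ω (r m y) = μC (g m * y)))) ∧
    (∀ (f : M →ₗ[ℂ] B) (g : M →ₗ[ℂ] C),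
      (∀ (x : B) (m : M), ω (l x m) = μB (x * f m)) →
      (∀ (m : M) (y : C), ω (r m y) = μC (g m * y)) →
      ((∀ (x : B) (m : M), f (l x m) = x * f m) ∧
        (∀ (m : M) (y : C), g (r m y) = g m * y) ∧
        (∀ m : M, μB (f m) = ω m) ∧ (∀ m : M, μC (g m) = ω m))) := by
  have h_iff := statement4_general (fun d hd => (hμB d hd).2) (fun d hd => (hμC d hd).1)
    h_l h_r h_BM h_MC ω
  exact ⟨exists₂_congr h_iff, fun f g hf hg => (h_iff f g).mpr ⟨hf, hg⟩⟩
end
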